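/- For every natural number n, b_{4,r,a,m}(n) ≡ Σ p(k) (mod 2), where the (finite) sum is over all triples (s, j, k) with s ∈ ℤ_{≥0}, j ∈ ℤ, k ∈ ℤ_{≥0}, and n = (pr + a)·s(s + 1)/2 + pm·j(3j + 1)/2 + pk, and where p(k) denotes the number of partitions of k. -/

import Mathlib

/-- `b p a r m v n` is the number of partitions of `n` such that for every part, its
multiplicity is congruent to `j·a (mod p)` for some `0 ≤ j ≤ v - 1` and satisfies
`j(pr + a) ≤ multiplicity ≤ j(pr + a) + p(m - 1)`. -/
noncomputable def b (p a r m v n : ℕ) : ℕ :=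
  Nat.card {π : n.Partition //
    ∀ i ∈ π.parts, ∃ j, j < v ∧
      π.parts.count i ≡ j * a [MOD p] ∧
      j * (p * r + a) ≤ π.parts.count i ∧
      π.parts.count i ≤ j * (p * r + a) + p * (m - 1)}

namespace PartitionParity

open Finset

/-- Shanks' finite form of Gauss' triangular number identity, with denominators cleared. -/
theorem sum_shanks {R : Type*} [CommRing R] (q : R) (n : ℕ) :
    ∑ s ∈ range (n + 1), (∏ k ∈ Ico s n, (1 - q ^ (2 * k + 2))) *
        (∏ k ∈ range s, (1 - q ^ (2 * k + 1))) * q ^ (s * (2 * n + 1)) =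
      (∏ k ∈ range n, (1 - q ^ (2 * k + 1))) *
        ∑ i ∈ range (2 * n + 1), q ^ (i * (i + 1) / 2) := by
  induction n with
  | zero => simp
  | succ n ih =>
    have telescope : ∀ t ≤ n, ∑ s ∈ range t,
        (∏ k ∈ Ico s (n + 1), (1 - q ^ (2 * k + 2))) *
          (∏ k ∈ range s, (1 - q ^ (2 * k + 1))) * q ^ (s * (2 * (n + 1) + 1)) =
        (1 - q ^ (2 * n + 1)) * ∑ s ∈ range t, (∏ k ∈ Ico s n, (1 - q ^ (2 * k + 2))) *
          (∏ k ∈ range s, (1 - q ^ (2 * k + 1))) * q ^ (s * (2 * n + 1)) +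
        (1 - q ^ (2 * t)) * (∏ k ∈ Ico t n, (1 - q ^ (2 * k + 2))) *
          (∏ k ∈ range t, (1 - q ^ (2 * k + 1))) * q ^ (t * (2 * n + 1)) := by
      intro t ht
      induction t with
      | zero => simp
      | succ t iht =>
        rw [sum_range_succ, sum_range_succ, iht (by omega), prod_Ico_succ_top (by omega),
          prod_eq_prod_Ico_succ_bot (by omega : t < n), prod_range_succ]
        ring
    have h₁ : (2 * n + 1) * (2 * n + 1 + 1) / 2 = (n + 1) * (2 * n + 1) := by
      rw [Nat.div_eq_of_eq_mul_left two_pos]; ring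
    have h₂ : (2 * n + 2) * (2 * n + 2 + 1) / 2 = (n + 1) * (2 * n + 3) := by
      rw [Nat.div_eq_of_eq_mul_left two_pos]; ring
    rw [show 2 * (n + 1) + 1 = 2 * n + 1 + 1 + 1 by ring,
      sum_range_succ (fun i ↦ q ^ (i * (i + 1) / 2)),
      sum_range_succ (fun i ↦ q ^ (i * (i + 1) / 2)), h₁, h₂, prod_range_succ]
    have ht := telescope n le_rfl
    rw [sum_range_succ] at ih
    rw [sum_range_succ, sum_range_succ]
    rw [show 2 * (n + 1) + 1 = 2 * n + 1 + 1 + 1 by ring] at ht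
    rw [ht]
    simp only [Ico_self, prod_empty, prod_range_succ, Nat.Ico_succ_singleton, prod_singleton] at ih ⊢
    linear_combination (1 - q ^ (2 * n + 1)) * ih

/-- Splitting a truncated Euler product into its odd and even factors. -/
theorem prod_range_two_mul {R : Type*} [CommRing R] (q : R) (n : ℕ) :
    ∏ k ∈ range (2 * n), (1 - q ^ (k + 1)) =
      (∏ k ∈ range n, (1 - q ^ (2 * k + 1))) * ∏ k ∈ range n, (1 - q ^ (2 * k + 2)) := by
  induction n with
  | zero => simp
  | succ n ih =>
    rw [show 2 * (n + 1) = 2 * n + 1 + 1 by ring, prod_range_succ, prod_range_succ, ih,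
      prod_range_succ, prod_range_succ]
    ring

/-- In characteristic two, the fourth power of a truncated Euler product is congruent to a
longer truncated Euler product times a partial theta sum. -/
theorem dvd_prod_pow_four_sub {R : Type*} [CommRing R] [CharP R 2] (q : R) (n : ℕ) :
    q ^ (2 * n + 1) ∣ (∏ k ∈ range n, (1 - q ^ (k + 1))) ^ 4 -
      (∏ k ∈ range (2 * n), (1 - q ^ (k + 1))) *
        ∑ i ∈ range (2 * n + 1), q ^ (i * (i + 1) / 2) := by
  have hsq : ∏ k ∈ range n, (1 - q ^ (2 * k + 2)) = (∏ k ∈ range n, (1 - q ^ (k + 1))) ^ 2 := by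
    rw [← prod_pow]
    refine prod_congr rfl fun k _ ↦ ?_
    rw [CharTwo.sub_eq_add, CharTwo.sub_eq_add, CharTwo.add_sq, ← pow_mul, one_pow]
    ring
  have h := sum_shanks q n
  rw [sum_range_succ'] at h
  simp only [zero_mul, pow_zero, mul_one, prod_range_zero, Nat.Ico_zero_eq_range, hsq] at h
  rw [prod_range_two_mul, hsq]
  have hd : q ^ (2 * n + 1) ∣ ∑ s ∈ range n, (∏ k ∈ Ico (s + 1) n, (1 - q ^ (2 * k + 2))) *
      (∏ k ∈ range (s + 1), (1 - q ^ (2 * k + 1))) * q ^ ((s + 1) * (2 * n + 1)) :=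
    dvd_sum fun s _ ↦ Dvd.dvd.mul_left (pow_dvd_pow q (by nlinarith)) _
  obtain ⟨c, hc⟩ := hd
  rw [hc] at h
  exact ⟨-c * (∏ k ∈ range n, (1 - q ^ (k + 1))) ^ 2, by
    linear_combination (∏ k ∈ range n, (1 - q ^ (k + 1))) ^ 2 * h⟩

section Topology

open PowerSeries PowerSeries.WithPiTopology Filter Topology

theorem tendsto_zero_of_X_pow_dvd {R : Type*} [CommRing R] [TopologicalSpace R]
    {f : ℕ → R⟦X⟧} (h : ∀ n, X ^ n ∣ f n) : Tendsto f atTop (𝓝 0) := by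
  rw [tendsto_iff_coeff_tendsto]
  refine fun d ↦ tendsto_atTop_of_eventually_const (i₀ := d + 1) fun n hn ↦ ?_
  rw [map_zero]
  exact X_pow_dvd_iff.mp (h n) d (by omega)

/-- A family of monomials whose exponents tend to infinity is summable. -/
theorem summable_smul_X_pow {R ι : Type*} [CommRing R] [TopologicalSpace R]
    {e : ι → ℕ} (he : ∀ d, {i | e i ≤ d}.Finite) (a : ι → R) :
    Summable fun i ↦ a i • (X : R⟦X⟧) ^ e i := by
  rw [summable_iff_summable_coeff]
  refine fun d ↦ summable_of_hasFiniteSupport ((he d).subset fun i hi ↦ ?_)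
  by_contra h
  have : d ≠ e i := fun h' ↦ h h'.ge
  simp [coeff_X_pow, this] at hi

theorem finite_setOf_add_le {ι κ : Type*} {e : ι → ℕ} {e' : κ → ℕ}
    (he : ∀ d, {i | e i ≤ d}.Finite) (he' : ∀ d, {i | e' i ≤ d}.Finite) (d : ℕ) :
    {x : ι × κ | e x.1 + e' x.2 ≤ d}.Finite :=
  ((he d).prod (he' d)).subset fun _ (hx : _ ≤ d) ↦
    ⟨(Nat.le_add_right _ _).trans hx, (Nat.le_add_left _ _).trans hx⟩

theorem finite_setOf_mul_le {ι : Type*} {e : ι → ℕ} {c : ℕ} (hc : c ≠ 0)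
    (he : ∀ d, {i | e i ≤ d}.Finite) (d : ℕ) : {i | c * e i ≤ d}.Finite :=
  (he d).subset fun _ hi ↦ (Nat.le_mul_of_pos_left _ (Nat.pos_of_ne_zero hc)).trans hi

theorem finite_setOf_triangular_le (d : ℕ) : {s : ℕ | s * (s + 1) / 2 ≤ d}.Finite := by
  refine (Set.finite_Iic d).subset fun s (hs : _ ≤ d) ↦ le_trans ?_ hs
  rw [Nat.le_div_iff_mul_le two_pos]
  rcases s with _ | s
  · simp
  · gcongr
    omega

theorem finite_setOf_pentagonal_neg_le (d : ℕ) : {j : ℤ | pentagonal (-j) ≤ d}.Finite :=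
  Set.Finite.preimage (f := fun j ↦ pentagonal (-j))
    (pentagonal_injective.comp neg_injective).injOn (Set.finite_Iic d)

theorem hasSum_smul_X_pow_mul {R ι κ : Type*} [CommRing R] [TopologicalSpace R]
    [IsTopologicalRing R] [T3Space R] {e : ι → ℕ} {e' : κ → ℕ} {a : ι → R} {a' : κ → R}
    {f g : R⟦X⟧} (he : ∀ d, {i | e i ≤ d}.Finite) (he' : ∀ d, {i | e' i ≤ d}.Finite)
    (hf : HasSum (fun i ↦ a i • X ^ e i) f) (hg : HasSum (fun i ↦ a' i • X ^ e' i) g) :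
    HasSum (fun x : ι × κ ↦ (a x.1 * a' x.2) • X ^ (e x.1 + e' x.2)) (f * g) := by
  have h (x : ι × κ) : (a x.1 • (X : R⟦X⟧) ^ e x.1) * (a' x.2 • X ^ e' x.2) =
      (a x.1 * a' x.2) • X ^ (e x.1 + e' x.2) := by
    rw [smul_mul_smul_comm, pow_add]
  have : T3Space R⟦X⟧ := inferInstanceAs (T3Space ((Unit →₀ ℕ) → R))
  have hs := hf.mul hg (by
    simp only [h]
    exact summable_smul_X_pow (finite_setOf_add_le he he') fun x ↦ a x.1 * a' x.2)
  simpa only [h] using hs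

theorem hasSum_smul_X_pow_mul_mul {R ι κ τ : Type*} [CommRing R] [TopologicalSpace R]
    [IsTopologicalRing R] [T3Space R] {e : ι → ℕ} {e' : κ → ℕ} {e'' : τ → ℕ} {a : τ → R}
    {f g h : R⟦X⟧} (he : ∀ d, {i | e i ≤ d}.Finite) (he' : ∀ d, {i | e' i ≤ d}.Finite)
    (he'' : ∀ d, {i | e'' i ≤ d}.Finite) (hf : HasSum (fun i ↦ X ^ e i) f)
    (hg : HasSum (fun i ↦ X ^ e' i) g) (hh : HasSum (fun i ↦ a i • X ^ e'' i) h) :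
    HasSum (fun x : ι × κ × τ ↦ a x.2.2 • X ^ (e x.1 + (e' x.2.1 + e'' x.2.2)))
      (f * (g * h)) := by
  simpa using hasSum_smul_X_pow_mul (a := fun _ ↦ 1) he (finite_setOf_add_le he' he'')
    (by simpa using hf) (hasSum_smul_X_pow_mul (a := fun _ ↦ 1) he' he'' (by simpa using hg) hh)

theorem continuous_expand {R : Type*} [CommRing R] [TopologicalSpace R] {c : ℕ} (hc : c ≠ 0) :
    Continuous (expand (R := R) c hc) := by
  rw [continuous_iff_continuousAt]
  refine fun f ↦ (tendsto_iff_coeff_tendsto R _ _ _).mpr fun d ↦ ?_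
  simp only [coeff_expand]
  split_ifs
  · exact (continuous_coeff R _).tendsto f
  · exact tendsto_const_nhds

instance : CharP (ZMod 2)⟦X⟧ 2 :=
  charP_of_injective_ringHom (C_injective (R := ZMod 2)) 2

/-- Gauss' theta series in characteristic two. -/
theorem hasSum_X_pow_triangular :
    HasSum (fun s : ℕ ↦ (X : (ZMod 2)⟦X⟧) ^ (s * (s + 1) / 2)) (pentagonalSeries (ZMod 2) ^ 3) := by
  have hE := (hasProd_one_sub_X_pow (ZMod 2)).tendsto_prod_nat
  have : Summable (fun s : ℕ ↦ (X : (ZMod 2)⟦X⟧) ^ (s * (s + 1) / 2)) := by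
    simpa using summable_smul_X_pow finite_setOf_triangular_le (fun _ ↦ (1 : ZMod 2))
  obtain ⟨ψ, hψ⟩ := this
  have hlim : Tendsto (fun n : ℕ ↦ (∏ k ∈ range n, (1 - (X : (ZMod 2)⟦X⟧) ^ (k + 1))) ^ 4 -
      (∏ k ∈ range (2 * n), (1 - X ^ (k + 1))) *
        ∑ i ∈ range (2 * n + 1), X ^ (i * (i + 1) / 2)) atTop
      (𝓝 (pentagonalSeries (ZMod 2) ^ 4 - pentagonalSeries (ZMod 2) * ψ)) := by
    have h₁ : Tendsto (fun n : ℕ ↦ 2 * n) atTop atTop :=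
      tendsto_atTop_mono (fun n ↦ by simp only [id]; omega) tendsto_id
    have h₂ : Tendsto (fun n : ℕ ↦ 2 * n + 1) atTop atTop :=
      tendsto_atTop_mono (fun n ↦ by simp only [id]; omega) tendsto_id
    exact (hE.pow 4).sub ((hE.comp h₁).mul (hψ.tendsto_sum_nat.comp h₂))
  have hzero := tendsto_nhds_unique hlim (tendsto_zero_of_X_pow_dvd fun n ↦
    (pow_dvd_pow X (by omega)).trans (dvd_prod_pow_four_sub X n))
  have hne : pentagonalSeries (ZMod 2) ≠ 0 := by
    rw [← tprod_one_sub_X_pow]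
    exact tprod_one_sub_X_pow_ne_zero _
  have : pentagonalSeries (ZMod 2) * (pentagonalSeries (ZMod 2) ^ 3 - ψ) = 0 := by
    linear_combination hzero
  rw [sub_eq_zero.mp ((mul_eq_zero.mp this).resolve_left hne)]
  exact hψ

/-- The generating function of the partition numbers is inverse to the pentagonal series. -/
theorem mk_card_partition_mul_pentagonalSeries :
    (PowerSeries.mk fun n ↦ (Nat.card n.Partition : ZMod 2)) * pentagonalSeries (ZMod 2) = 1 := by
  have h := (Nat.Partition.hasProd_powerSeriesMk_card_restricted (ZMod 2) (fun _ ↦ True)).mul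
    (hasProd_one_sub_X_pow (ZMod 2))
  have hone : ∀ i : ℕ, (if True then ∑' j : ℕ, (X : (ZMod 2)⟦X⟧) ^ ((i + 1) * j) else 1) *
      (1 - X ^ (i + 1)) = 1 := by
    intro i
    simp only [if_true, pow_mul]
    exact tsum_pow_mul_one_sub_of_constantCoeff_eq_zero (by simp)
  simp only [hone] at h
  have := h.unique hasProd_one
  simpa [Nat.Partition.restricted, Nat.card_eq_fintype_card] using this

/-- The contribution of a single part size to the generating function of `b`, modulo two. -/
theorem sum_range_four_mul_range_mul {c p m : ℕ} (q : (ZMod 2)⟦X⟧) :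
    (∑ x ∈ range 4 ×ˢ range m, q ^ (x.1 * c + p * x.2)) * (1 - q ^ p) =
      (1 - q ^ c) ^ 3 * (1 - q ^ (p * m)) := by
  have h : ∑ x ∈ range 4 ×ˢ range m, q ^ (x.1 * c + p * x.2) =
      (∑ j ∈ range 4, (q ^ c) ^ j) * ∑ l ∈ range m, (q ^ p) ^ l := by
    rw [sum_mul_sum, sum_product]
    simp only [pow_add, mul_comm _ c, pow_mul]
  rw [h, mul_assoc, geom_sum_mul_neg, pow_mul]
  congr 1
  have h2 : (2 : (ZMod 2)⟦X⟧) = 0 := CharTwo.two_eq_zero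
  simp only [sum_range_succ, sum_range_zero]
  linear_combination (2 * q ^ c - q ^ (2 * c) + q ^ (3 * c)) * h2

/-- A multiplicity is admissible for `b p a r m 4` exactly when it is a value of
`(j, l) ↦ j (p r + a) + p l` on `range 4 ×ˢ range m`. -/
theorem admissible_iff {p a r m : ℕ} (hp : 0 < p) (hm : 1 ≤ m) (k : ℕ) :
    (∃ j, j < 4 ∧ k ≡ j * a [MOD p] ∧ j * (p * r + a) ≤ k ∧
      k ≤ j * (p * r + a) + p * (m - 1)) ↔
    k ∈ (range 4 ×ˢ range m).image fun x : ℕ × ℕ ↦ x.1 * (p * r + a) + p * x.2 := by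
  have hmod (j : ℕ) : j * (p * r + a) ≡ j * a [MOD p] := by
    rw [mul_add, show j * (p * r) = p * (j * r) by ring]
    simp [Nat.ModEq]
  simp only [mem_image, mem_product, mem_range, Prod.exists]
  constructor
  · rintro ⟨j, hj, hk, hle, hge⟩
    obtain ⟨l, hl⟩ := (Nat.modEq_iff_dvd' hle).mp ((hmod j).trans hk.symm)
    rw [Nat.sub_eq_iff_eq_add' hle] at hl
    refine ⟨j, l, ⟨hj, ?_⟩, hl.symm⟩
    have : l ≤ m - 1 := Nat.le_of_mul_le_mul_left (by omega) hp
    omega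
  · rintro ⟨j, l, ⟨hj, hl⟩, rfl⟩
    refine ⟨j, hj, ?_, by omega, ?_⟩
    · simpa [Nat.ModEq] using hmod j
    · gcongr
      omega

theorem injOn_admissible {p a r m : ℕ} (hp : 4 ≤ p) (hco : Nat.gcd a p = 1) :
    Set.InjOn (fun x : ℕ × ℕ ↦ x.1 * (p * r + a) + p * x.2)
      (range 4 ×ˢ range m : Finset (ℕ × ℕ)) := by
  rintro ⟨j, l⟩ hx ⟨j', l'⟩ hx' h
  simp only [coe_product, coe_range, Set.mem_prod, Set.mem_Iio] at hx hx' h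
  have hmod (j l : ℕ) : j * (p * r + a) + p * l ≡ j * a [MOD p] := by
    rw [mul_add, show j * (p * r) + j * a + p * l = j * a + p * (j * r + l) by ring]
    simp [Nat.ModEq]
  have hj : j ≡ j' [MOD p] := Nat.ModEq.cancel_right_of_coprime (c := a)
    (by rwa [Nat.gcd_comm]) ((hmod j l).symm.trans (h ▸ hmod j' l'))
  obtain rfl := hj.eq_of_lt_of_lt (by omega) (by omega)
  have : p * l = p * l' := by omega
  rw [Nat.eq_of_mul_eq_mul_left (by omega) this]

theorem one_add_tsum_indicator {S : Finset ℕ} (h0 : 0 ∈ S) (i : ℕ) :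
    1 + ∑' k, (if k + 1 ∈ S then (1 : ZMod 2) else 0) • (X : (ZMod 2)⟦X⟧) ^ (i * (k + 1)) =
      ∑ k ∈ S, (X ^ i) ^ k := by
  have h : HasSum (fun k ↦ (if k ∈ S then (1 : ZMod 2) else 0) • (X : (ZMod 2)⟦X⟧) ^ (i * k))
      (∑ k ∈ S, (if k ∈ S then (1 : ZMod 2) else 0) • (X : (ZMod 2)⟦X⟧) ^ (i * k)) :=
    hasSum_sum_of_ne_finset_zero fun k hk ↦ by simp [hk]
  rw [((hasSum_nat_add_iff' 1).mpr h).tsum_eq]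
  simp only [sum_range_one, h0, if_true, mul_zero, pow_zero, one_smul, add_sub_cancel]
  exact sum_congr rfl fun k hk ↦ by rw [if_pos hk, one_smul, pow_mul]

/-- The generating function of `b p a r m 4` modulo two. -/
theorem hasProd_mk_b {p a r m : ℕ} (hp : 4 ≤ p) (hco : Nat.gcd a p = 1) (hm : 1 ≤ m) :
    HasProd (fun i : ℕ ↦ ∑ x ∈ range 4 ×ˢ range m,
        ((X : (ZMod 2)⟦X⟧) ^ (i + 1)) ^ (x.1 * (p * r + a) + p * x.2))
      (PowerSeries.mk fun n ↦ (b p a r m 4 n : ZMod 2)) := by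
  classical
  set S := (range 4 ×ˢ range m).image fun x : ℕ × ℕ ↦ x.1 * (p * r + a) + p * x.2 with hS
  have h0 : 0 ∈ S := by
    rw [hS, mem_image]
    exact ⟨(0, 0), by simp; omega, by simp⟩
  have h := Nat.Partition.hasProd_genFun (fun _ k ↦ if k ∈ S then (1 : ZMod 2) else 0)
  have hsum (i : ℕ) := one_add_tsum_indicator h0 i
  simp only [hsum] at h
  have hgen : (PowerSeries.mk fun n ↦ (b p a r m 4 n : ZMod 2)) =
      Nat.Partition.genFun fun _ k ↦ if k ∈ S then (1 : ZMod 2) else 0 := by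
    ext n
    rw [Nat.Partition.coeff_genFun, coeff_mk, b]
    simp only [admissible_iff (by omega : 0 < p) hm, ← hS, Finsupp.prod, prod_boole]
    rw [Nat.card_eq_fintype_card, Fintype.card_subtype]
    simp
  rw [hgen]
  simpa only [hS, sum_image (injOn_admissible hp hco)] using h

/-- The generating function of `b p a r m 4` modulo two as a product of a theta series, a
pentagonal series and the partition generating function. -/
theorem mk_b_eq {p a r m : ℕ} (hp : 4 ≤ p) (hco : Nat.gcd a p = 1) (hm : 1 ≤ m)
    (hp0 : p ≠ 0) (hc : p * r + a ≠ 0) (hpm : p * m ≠ 0) :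
    (PowerSeries.mk fun n ↦ (b p a r m 4 n : ZMod 2)) =
      expand (p * r + a) hc (pentagonalSeries (ZMod 2) ^ 3) *
        (expand (p * m) hpm (pentagonalSeries (ZMod 2)) *
          expand p hp0 (PowerSeries.mk fun n ↦ (Nat.card n.Partition : ZMod 2))) := by
  have hE {c : ℕ} (hc : c ≠ 0) : HasProd (fun n ↦ 1 - ((X : (ZMod 2)⟦X⟧) ^ (n + 1)) ^ c)
      (expand c hc (pentagonalSeries (ZMod 2))) := by
    convert (hasProd_one_sub_X_pow (ZMod 2)).map (expand c hc) (continuous_expand hc) using 2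
    simp [← pow_mul, mul_comm]
  have h₁ := (hasProd_mk_b (r := r) hp hco hm).mul (hE hp0)
  simp only [sum_range_four_mul_range_mul] at h₁
  have h₂ := h₁.unique (((hE hc).pow 3).mul (hE hpm))
  have h₃ := congrArg (expand p hp0) mk_card_partition_mul_pentagonalSeries
  rw [map_mul, map_one] at h₃
  rw [map_pow]
  linear_combination (expand p hp0 (PowerSeries.mk fun n ↦ (Nat.card n.Partition : ZMod 2))) * h₂ -
    (PowerSeries.mk fun n ↦ (b p a r m 4 n : ZMod 2)) * h₃

theorem hasSum_expand {R ι : Type*} [CommRing R] [TopologicalSpace R] {e : ι → ℕ} {f : R⟦X⟧}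
    {a : ι → R} {c : ℕ} (hc : c ≠ 0) (h : HasSum (fun i ↦ a i • X ^ e i) f) :
    HasSum (fun i ↦ a i • X ^ (c * e i)) (expand c hc f) := by
  simpa [Function.comp_def, ← pow_mul] using h.map (expand c hc) (continuous_expand hc)

theorem hasSum_expand_X_pow {R ι : Type*} [CommRing R] [TopologicalSpace R] {e : ι → ℕ}
    {f : R⟦X⟧} {c : ℕ} (hc : c ≠ 0) (h : HasSum (fun i ↦ X ^ e i) f) :
    HasSum (fun i ↦ X ^ (c * e i)) (expand c hc f) := by
  simpa [Function.comp_def, ← pow_mul] using h.map (expand c hc) (continuous_expand hc)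

theorem exponent_eq_iff (p a r m n s : ℕ) (j : ℤ) (k : ℕ) :
    (n : ℤ) = ((p : ℤ) * r + a) * s * (s + 1) / 2 + (p : ℤ) * m * j * (3 * j + 1) / 2
        + (p : ℤ) * k ↔
      n = (p * r + a) * (s * (s + 1) / 2) + (p * m * pentagonal (-j) + p * k) := by
  have h₁ : ((p : ℤ) * r + a) * s * (s + 1) / 2 =
      (((p * r + a) * (s * (s + 1) / 2) : ℕ) : ℤ) := by
    have : s * (s + 1) / 2 * 2 = s * (s + 1) := Nat.div_mul_cancel
      (Nat.even_mul_succ_self s).two_dvd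
    apply Int.ediv_eq_of_eq_mul_left two_ne_zero
    zify at this
    push_cast
    linear_combination -((p : ℤ) * r + a) * this
  have h₂ : (p : ℤ) * m * j * (3 * j + 1) / 2 = ((p * m * pentagonal (-j) : ℕ) : ℤ) := by
    apply Int.ediv_eq_of_eq_mul_left two_ne_zero
    push_cast
    linear_combination -((p : ℤ) * m) * two_mul_natCast_pentagonal_neg j
  rw [h₁, h₂]
  norm_cast
  rw [add_assoc]

theorem hasSum_mk_b {p a r m : ℕ} (hp : 4 ≤ p) (ha : 0 < a) (hco : Nat.gcd a p = 1)
    (hm : 1 ≤ m) :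
    HasSum (fun x : ℕ × ℤ × ℕ ↦ (Nat.card x.2.2.Partition : ZMod 2) • (X : (ZMod 2)⟦X⟧) ^
        ((p * r + a) * (x.1 * (x.1 + 1) / 2) + (p * m * pentagonal (-x.2.1) + p * x.2.2)))
      (PowerSeries.mk fun n ↦ (b p a r m 4 n : ZMod 2)) := by
  have hp0 : p ≠ 0 := by omega
  have hc : p * r + a ≠ 0 := by omega
  have hpm : p * m ≠ 0 := mul_ne_zero hp0 (by omega)
  rw [mk_b_eq hp hco hm hp0 hc hpm]
  have hE : HasSum (fun j : ℤ ↦ (X : (ZMod 2)⟦X⟧) ^ pentagonal (-j))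
      (pentagonalSeries (ZMod 2)) := by
    have h := (Equiv.neg ℤ).hasSum_iff.mpr (hasSum_pentagonalSeries (ZMod 2))
    have hone (j : ℤ) : ((Int.negOnePow j : ℤ) : (ZMod 2)⟦X⟧) = 1 := by
      rcases Int.units_eq_one_or j.negOnePow with h | h <;> simp [h, CharTwo.neg_eq]
    simpa [Function.comp_def, hone] using h
  have hP : HasSum (fun k : ℕ ↦ (Nat.card k.Partition : ZMod 2) • (X : (ZMod 2)⟦X⟧) ^ k)
      (PowerSeries.mk fun n ↦ (Nat.card n.Partition : ZMod 2)) := by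
    simpa [monomial_eq_C_mul_X_pow, smul_eq_C_mul] using hasSum_of_monomials_self
      (PowerSeries.mk fun n ↦ (Nat.card n.Partition : ZMod 2))
  have h := hasSum_smul_X_pow_mul_mul (finite_setOf_mul_le hc finite_setOf_triangular_le)
    (finite_setOf_mul_le hpm finite_setOf_pentagonal_neg_le)
    (finite_setOf_mul_le hp0 (e := fun k ↦ k) Set.finite_Iic)
    (hasSum_expand_X_pow hc hasSum_X_pow_triangular) (hasSum_expand_X_pow hpm hE)
    (hasSum_expand hp0 hP)
  convert h using 1

end Topology
end PartitionParity

/-- For every `n`, `b_{4,r,a,m}(n) ≡ Σ p(k) (mod 2)`, summed over all triples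
`(s, j, k)` with `s ∈ ℤ≥0`, `j ∈ ℤ`, `k ∈ ℤ≥0` and
`n = (pr+a)·s(s+1)/2 + pm·j(3j+1)/2 + pk`, where `p(k)` is the number of
partitions of `k`. Only finitely many terms of the sum are nonzero. -/
theorem b_four_mod_two (p a r m : ℕ) (hp : 4 ≤ p) (ha : 0 < a)
    (hco : Nat.gcd a p = 1) (hm : 1 ≤ m) (n : ℕ) :
    (b p a r m 4 n : ℤ) ≡
      (∑' x : ℕ × ℤ × ℕ,
        if (n : ℤ) = ((p : ℤ) * r + a) * x.1 * (x.1 + 1) / 2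
            + (p : ℤ) * m * x.2.1 * (3 * x.2.1 + 1) / 2 + (p : ℤ) * x.2.2
        then (Nat.card (Nat.Partition x.2.2) : ℤ) else 0) [ZMOD 2] := by
  open PartitionParity PowerSeries WithPiTopology in
  refine (ZMod.intCast_eq_intCast_iff _ _ 2).mp ?_
  have h := (hasSum_iff_hasSum_coeff (ZMod 2)).mp (hasSum_mk_b (r := r) hp ha hco hm) n
  simp only [coeff_mk, map_smul, coeff_X_pow] at h
  simp only [exponent_eq_iff]
  have hfin : Summable fun x : ℕ × ℤ × ℕ ↦ if n = (p * r + a) * (x.1 * (x.1 + 1) / 2) +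
      (p * m * pentagonal (-x.2.1) + p * x.2.2) then (Nat.card x.2.2.Partition : ℤ) else 0 := by
    have f₁ := finite_setOf_mul_le (c := p * r + a) (by omega) finite_setOf_triangular_le
    have f₂ := finite_setOf_mul_le (c := p * m) (by positivity) finite_setOf_pentagonal_neg_le
    have f₃ := finite_setOf_mul_le (c := p) (by omega) (e := id) Set.finite_Iic
    refine summable_of_hasFiniteSupport
      ((finite_setOf_add_le f₁ (finite_setOf_add_le f₂ f₃) n).subset fun x hx ↦ ?_)
    by_contra h'
    exact hx (if_neg fun h'' ↦ h' h''.ge)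
  have h' := hfin.hasSum.map (Int.castRingHom (ZMod 2)) continuous_of_discreteTopology
  rw [Int.cast_natCast]
  refine h.unique (h'.congr_fun fun x ↦ ?_)
  by_cases hx : n = (p * r + a) * (x.1 * (x.1 + 1) / 2) +
      (p * m * pentagonal (-x.2.1) + p * x.2.2)
  · simp only [Function.comp_apply, if_pos hx, smul_eq_mul, mul_one, map_natCast]
  · simp only [Function.comp_apply, if_neg hx, smul_zero, map_zero]
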